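/- (Theorem 4.4) If M satisfies H/K = μ on U for a constant μ ≠ 0 and M is not part of a sphere, then M is of null III-type 2: explicitly, x = x* + (−μ n) where x* = x + μ n satisfies Δ^{III} x* = 0 (it is a minimal surface), Δ^{III}(−μ n) = 2(−μ n), and both summands are nonconstant. -/

import Mathlib

open Matrix

noncomputable section

/-- The parameter domain `ℝ²`. -/
abbrev Param : Type := Fin 2 → ℝ

/-- Vectors in Euclidean 3-space. -/
abbrev Vec3 : Type := Fin 3 → ℝ

/-- Partial derivative of a vector-valued function in the `i`-th coordinate direction. -/
noncomputable def pd (i : Fin 2) (f : Param → Vec3) (u : Param) : Vec3 :=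
  fderiv ℝ f u (Pi.single i 1)

/-- Partial derivative of a scalar function in the `i`-th coordinate direction. -/
noncomputable def pds (i : Fin 2) (f : Param → ℝ) (u : Param) : ℝ :=
  fderiv ℝ f u (Pi.single i 1)

/-- The Euclidean inner product on `ℝ³`. -/
def dot3 (a b : Vec3) : ℝ := ∑ k, a k * b k

/-- The Euclidean norm on `ℝ³`. -/
noncomputable def norm3 (a : Vec3) : ℝ := Real.sqrt (dot3 a a)

/-- The Gauss map `n = (x_{/1} × x_{/2}) / ‖x_{/1} × x_{/2}‖`. -/
noncomputable def gaussMap (x : Param → Vec3) (u : Param) : Vec3 :=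
  (norm3 (crossProduct (pd 0 x u) (pd 1 x u)))⁻¹ • crossProduct (pd 0 x u) (pd 1 x u)

/-- Components `g_{ij}` of the first fundamental form. -/
noncomputable def fformI (x : Param → Vec3) (u : Param) : Matrix (Fin 2) (Fin 2) ℝ :=
  Matrix.of fun i j => dot3 (pd i x u) (pd j x u)

/-- Components `b_{ij} = ⟨∂²x/∂u^i∂u^j, n⟩` of the second fundamental form. -/
noncomputable def fformII (x : Param → Vec3) (u : Param) : Matrix (Fin 2) (Fin 2) ℝ :=
  Matrix.of fun i j => dot3 (pd i (pd j x) u) (gaussMap x u)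

/-- Components `e_{ij} = ⟨n_{/i}, n_{/j}⟩` of the third fundamental form. -/
noncomputable def fformIII (x : Param → Vec3) (u : Param) : Matrix (Fin 2) (Fin 2) ℝ :=
  Matrix.of fun i j => dot3 (pd i (gaussMap x) u) (pd j (gaussMap x) u)

/-- The Gauss curvature `K = det(b_{ij}) / det(g_{ij})`. -/
noncomputable def gaussCurv (x : Param → Vec3) (u : Param) : ℝ :=
  (fformII x u).det / (fformI x u).det

/-- The mean curvature `H = (1/2) g^{ij} b_{ij}`. -/
noncomputable def meanCurv (x : Param → Vec3) (u : Param) : ℝ :=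
  (1 / 2) * ∑ i, ∑ j, (fformI x u)⁻¹ i j * fformII x u i j

/-- First Beltrami operator `∇^J(φ, ψ) = a^{ij} φ_{/i} ψ_{/j}` with respect to the
fundamental form with component matrix `a`, for scalar `φ` and `ℝ³`-valued `ψ`. -/
noncomputable def beltrami1 (a : Param → Matrix (Fin 2) (Fin 2) ℝ)
    (φ : Param → ℝ) (ψ : Param → Vec3) (u : Param) : Vec3 :=
  ∑ i, ∑ j, ((a u)⁻¹ i j * pds i φ u) • pd j ψ u

/-- Second Beltrami operator
`Δ^J f = −(1/√|det a|) ∂_i (√|det a| a^{ij} ∂_j f)` with respect to the fundamental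
form with component matrix `a`, acting componentwise on `ℝ³`-valued functions. -/
noncomputable def beltrami2 (a : Param → Matrix (Fin 2) (Fin 2) ℝ)
    (f : Param → Vec3) (u : Param) : Vec3 :=
  -((Real.sqrt |(a u).det|)⁻¹ •
    ∑ i, ∑ j, pd i (fun v => (Real.sqrt |(a v).det| * (a v)⁻¹ i j) • pd j f v) u)

/-- `x` is an immersion on `U`: the partial derivatives are linearly independent. -/
def Immersed (x : Param → Vec3) (U : Set Param) : Prop :=
  ∀ u ∈ U, LinearIndependent ℝ ![pd 0 x u, pd 1 x u]

/-- `f` is nonconstant on `U`. -/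
def NonconstOn (f : Param → Vec3) (U : Set Param) : Prop :=
  ¬ ∃ v : Vec3, ∀ u ∈ U, f u = v

/-!
A map `f` whose partial derivatives are orthogonal to the Gauss map `n` satisfies
`f_{/i} = A n_{/i}` with an endomorphism `A` of the tangent plane that is self-adjoint by equality
of mixed partial derivatives. In dimension two `adj A = tr A - A`, so if `tr A = t` is constant the
flux `√e e^{ij} f_{/j}` is, up to sign, the vector product of `n` with the other partial derivative
of `f - t n`. The second derivatives of `f - t n` then cancel in the divergence, leaving
`Δ^{III} f = t n`.

For `f = n` this gives `Δ^{III} n = 2 n`. For `f = x` the trace is `-2 H / K`, so for `f = x + μ n`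
it is `2 μ - 2 H / K = 0`, whence `Δ^{III} x* = 0`; the mean curvature of `x*` is a multiple of the
same trace. Were `x*` constant, `M` would lie on the sphere of radius `|μ|` about it.
-/

open Filter Topology
open scoped ContDiff

section TangentPlane

variable {R : Type*} [CommRing R] {n a b c d p q : Fin 3 → R}

lemma cross_eq_smul_normal (hn : n ⬝ᵥ n = 1) (ha : n ⬝ᵥ a = 0) (hb : n ⬝ᵥ b = 0) :
    a ⨯₃ b = (n ⬝ᵥ a ⨯₃ b) • n := by
  have normal_cross : n ⨯₃ (a ⨯₃ b) = 0 := by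
    rw [cross_cross_eq_smul_sub_smul', hb, dotProduct_comm a, ha, zero_smul, zero_smul, sub_zero]
  have expand := cross_cross_eq_smul_sub_smul n (a ⨯₃ b) n
  rw [normal_cross, map_zero, LinearMap.zero_apply, hn, one_smul, dotProduct_comm] at expand
  exact (sub_eq_zero.1 expand.symm)

lemma triple_product_mul_triple_product (hn : n ⬝ᵥ n = 1) (ha : n ⬝ᵥ a = 0) (hb : n ⬝ᵥ b = 0)
    (hc : n ⬝ᵥ c = 0) (hd : n ⬝ᵥ d = 0) :
    (n ⬝ᵥ a ⨯₃ b) * (n ⬝ᵥ c ⨯₃ d) = a ⬝ᵥ c * b ⬝ᵥ d - a ⬝ᵥ d * b ⬝ᵥ c := by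
  rw [← cross_dot_cross, cross_eq_smul_normal hn ha hb, cross_eq_smul_normal hn hc hd]
  simp only [smul_dotProduct, dotProduct_smul, hn, smul_eq_mul, mul_one]
  exact mul_comm _ _

/-- With `p = A a` and `q = A b` for an endomorphism `A` of the tangent plane, `hsymm` says that
`A` is self-adjoint and `htrace` that `tr A = t`; the identity is then Cayley–Hamilton in the form
`adj A = tr A - A`. -/
lemma smul_sub_smul_eq_triple_product_smul_cross {t : R} (hn : n ⬝ᵥ n = 1) (ha : n ⬝ᵥ a = 0)
    (hb : n ⬝ᵥ b = 0) (hp : n ⬝ᵥ p = 0) (hq : n ⬝ᵥ q = 0) (hsymm : p ⬝ᵥ b = q ⬝ᵥ a)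
    (htrace : n ⬝ᵥ a ⨯₃ q + n ⬝ᵥ p ⨯₃ b = t * (n ⬝ᵥ a ⨯₃ b)) :
    (b ⬝ᵥ b) • p - (a ⬝ᵥ b) • q = (n ⬝ᵥ a ⨯₃ b) • n ⨯₃ (q - t • b) := by
  have expand {v w : Fin 3 → R} (hv : n ⬝ᵥ v = 0) (hw : n ⬝ᵥ w = 0) (z : Fin 3 → R) :
      (n ⬝ᵥ v ⨯₃ w) • n ⨯₃ z = (v ⬝ᵥ z) • w - (w ⬝ᵥ z) • v := by
    rw [← cross_cross_eq_smul_sub_smul, cross_eq_smul_normal hn hv hw, dotProduct_smul, hn,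
      smul_eq_mul, mul_one, map_smul, LinearMap.smul_apply]
  symm
  calc (n ⬝ᵥ a ⨯₃ b) • n ⨯₃ (q - t • b)
      = (n ⬝ᵥ a ⨯₃ b) • n ⨯₃ q - (n ⬝ᵥ a ⨯₃ q) • n ⨯₃ b - (n ⬝ᵥ p ⨯₃ b) • n ⨯₃ b := by
        rw [sub_sub, ← add_smul, htrace, map_sub, map_smul]
        module
    _ = (b ⬝ᵥ b) • p - (a ⬝ᵥ b) • q := by
        rw [expand ha hb, expand ha hq, expand hp hb, hsymm, dotProduct_comm a q,
          dotProduct_comm b q]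
        module

end TangentPlane

section PartialDerivatives

variable {f g : Param → Vec3} {u : Param}

lemma dot3_eq_dotProduct (a b : Vec3) : dot3 a b = a ⬝ᵥ b := rfl

lemma contDiffAt_pd {k m : ℕ∞ω} (hf : ContDiffAt ℝ m f u) (hk : k + 1 ≤ m) (i : Fin 2) :
    ContDiffAt ℝ k (pd i f) u :=
  (hf.fderiv_right hk).clm_apply contDiffAt_const

lemma differentiableAt_pd (hf : ContDiffAt ℝ 2 f u) (i : Fin 2) :
    DifferentiableAt ℝ (pd i f) u :=
  (contDiffAt_pd (k := 1) hf (by norm_num) i).differentiableAt one_ne_zero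

lemma pd_congr (h : f =ᶠ[𝓝 u] g) (i : Fin 2) : pd i f u = pd i g u := by
  rw [pd, pd, h.fderiv_eq]

lemma pd_const (c : Vec3) (i : Fin 2) : pd i (fun _ => c) u = 0 := by
  simp [pd]

lemma pd_add (hf : DifferentiableAt ℝ f u) (hg : DifferentiableAt ℝ g u) (i : Fin 2) :
    pd i (fun v => f v + g v) u = pd i f u + pd i g u := by
  simp only [pd, fderiv_fun_add hf hg, _root_.add_apply]

lemma pd_const_smul (c : ℝ) (f : Param → Vec3) (u : Param) (i : Fin 2) :
    pd i (fun v => c • f v) u = c • pd i f u := by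
  change fderiv ℝ (c • f) u _ = _
  rw [fderiv_const_smul_field]
  rfl

lemma pd_add_const_smul (hf : DifferentiableAt ℝ f u) (hg : DifferentiableAt ℝ g u) (c : ℝ)
    (i : Fin 2) : pd i (fun v => f v + c • g v) u = pd i f u + c • pd i g u := by
  rw [pd_add hf (hg.fun_const_smul c), pd_const_smul]

lemma pd_comm (hf : ContDiffAt ℝ 2 f u) (i j : Fin 2) : pd i (pd j f) u = pd j (pd i f) u := by
  have hdf : DifferentiableAt ℝ (fderiv ℝ f) u :=
    (hf.fderiv_right (m := 1) (by norm_num)).differentiableAt one_ne_zero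
  have pd_pd (i j : Fin 2) :
      pd i (pd j f) u = fderiv ℝ (fderiv ℝ f) u (Pi.single i 1) (Pi.single j 1) := by
    change fderiv ℝ (fun v => fderiv ℝ f v (Pi.single j 1)) u _ = _
    simp [fderiv_clm_apply hdf (differentiableAt_const _)]
  rw [pd_pd, pd_pd]
  exact hf.isSymmSndFDerivAt (by simp) _ _

lemma contDiffAt_dotProduct {m : ℕ∞ω} (hf : ContDiffAt ℝ m f u) (hg : ContDiffAt ℝ m g u) :
    ContDiffAt ℝ m (fun v => f v ⬝ᵥ g v) u := by
  have hdot := (dotProductBilin (A := ℝ) (m := Fin 3) ℝ ℝ).toContinuousBilinearMap.contDiff (n := m)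
  exact (hdot.contDiffAt.comp u hf).clm_apply hg

lemma contDiffAt_cross {m : ℕ∞ω} (hf : ContDiffAt ℝ m f u) (hg : ContDiffAt ℝ m g u) :
    ContDiffAt ℝ m (fun v => f v ⨯₃ g v) u := by
  have hcross := (crossProduct (R := ℝ)).toContinuousBilinearMap.contDiff (n := m)
  exact (hcross.contDiffAt.comp u hf).clm_apply hg

lemma pd_cross (hf : DifferentiableAt ℝ f u) (hg : DifferentiableAt ℝ g u) (i : Fin 2) :
    pd i (fun v => f v ⨯₃ g v) u = pd i f u ⨯₃ g u + f u ⨯₃ pd i g u := by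
  have leibniz := congrArg (· (Pi.single i 1))
    (crossProduct.toContinuousBilinearMap.fderiv_of_bilinear hf hg)
  exact leibniz.trans (add_comm _ _)

lemma pd_dotProduct_add_of_eventuallyEq_const (hf : DifferentiableAt ℝ f u)
    (hg : DifferentiableAt ℝ g u) {c : ℝ} (h : (fun v => f v ⬝ᵥ g v) =ᶠ[𝓝 u] fun _ => c)
    (i : Fin 2) : pd i f u ⬝ᵥ g u + f u ⬝ᵥ pd i g u = 0 := by
  have leibniz := congrArg (· (Pi.single i 1))
    ((dotProductBilin ℝ ℝ).toContinuousBilinearMap.fderiv_of_bilinear hf hg)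
  have hconst : fderiv ℝ (fun v => f v ⬝ᵥ g v) u (Pi.single i 1) = 0 := by
    rw [h.fderiv_eq, fderiv_const_apply, _root_.zero_apply]
  exact ((add_comm _ _).trans leibniz.symm).trans hconst

lemma pd_cross_pd_sub_pd_cross_pd (hf : DifferentiableAt ℝ f u) (hg : ContDiffAt ℝ 2 g u) :
    pd 0 (fun v => f v ⨯₃ pd 1 g v) u - pd 1 (fun v => f v ⨯₃ pd 0 g v) u =
      pd 0 f u ⨯₃ pd 1 g u + pd 0 g u ⨯₃ pd 1 f u := by
  rw [pd_cross hf (differentiableAt_pd hg 1), pd_cross hf (differentiableAt_pd hg 0),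
    pd_comm hg 1 0, ← cross_anticomm (pd 1 f u)]
  abel

end PartialDerivatives

section Sign

variable {𝕜 : Type*} [Field 𝕜] [LinearOrder 𝕜]

lemma abs_inv_mul_self_eq_sign [IsStrictOrderedRing 𝕜] (w : 𝕜) : |w|⁻¹ * w = SignType.sign w := by
  rcases eq_or_ne w 0 with rfl | hw
  · simp
  · rw [inv_mul_eq_iff_eq_mul₀ (abs_ne_zero.2 hw), abs_mul_sign]

lemma sign_sq_eq_one {w : 𝕜} (hw : w ≠ 0) : (SignType.sign w : 𝕜) ^ 2 = 1 := by
  rcases hw.lt_or_gt with hneg | hpos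
  · simp [sign_neg hneg]
  · simp [sign_pos hpos]

lemma eventually_sign_eq {X : Type*} [TopologicalSpace X] [TopologicalSpace 𝕜] [OrderTopology 𝕜]
    {w : X → 𝕜} {x : X} (hw : ContinuousAt w x) (hx : w x ≠ 0) :
    ∀ᶠ y in 𝓝 x, SignType.sign (w y) = SignType.sign (w x) := by
  have hsign := (continuousAt_sign_of_ne_zero hx).comp hw
  rwa [ContinuousAt, nhds_discrete SignType, tendsto_pure] at hsign

end Sign

section Norm

lemma norm3_mul_self (a : Vec3) : norm3 a * norm3 a = a ⬝ᵥ a :=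
  Real.mul_self_sqrt (dotProduct_self_star_nonneg a)

lemma norm3_ne_zero {a : Vec3} (ha : a ≠ 0) : norm3 a ≠ 0 := fun h =>
  ha (dotProduct_self_eq_zero.1 (by rw [← norm3_mul_self, h, zero_mul]))

lemma norm3_smul_of_unit {a : Vec3} (ha : a ⬝ᵥ a = 1) (c : ℝ) : norm3 (c • a) = |c| := by
  rw [norm3, dot3_eq_dotProduct, smul_dotProduct, dotProduct_smul, ha, smul_eq_mul, smul_eq_mul,
    mul_one, Real.sqrt_mul_self_eq_abs]

end Norm

section AreaDensity

/-- The signed area density `⟨n, f_{/1} × f_{/2}⟩` of the map `f` with respect to the field `n`. For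
a unit normal field `n` of `f` it is a signed square root of `det (fformI f)`. -/
def areaDensity (n f : Param → Vec3) (u : Param) : ℝ := n u ⬝ᵥ pd 0 f u ⨯₃ pd 1 f u

/-- The symmetric bilinear form in `f` and `g` that polarizes twice the area density. If
`f_{/i} = A n_{/i}`, then `mixedAreaDensity n n f = tr A * areaDensity n n`. -/
def mixedAreaDensity (n f g : Param → Vec3) (u : Param) : ℝ :=
  n u ⬝ᵥ pd 0 f u ⨯₃ pd 1 g u + n u ⬝ᵥ pd 0 g u ⨯₃ pd 1 f u

variable {n f g h : Param → Vec3} {u : Param}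

lemma mixedAreaDensity_self (n f : Param → Vec3) (u : Param) :
    mixedAreaDensity n f f u = 2 * areaDensity n f u :=
  (two_mul _).symm

lemma mixedAreaDensity_comm (n f g : Param → Vec3) (u : Param) :
    mixedAreaDensity n f g u = mixedAreaDensity n g f u :=
  add_comm _ _

lemma areaDensity_add_const_smul (hf : DifferentiableAt ℝ f u) (hg : DifferentiableAt ℝ g u)
    (c : ℝ) : areaDensity n (fun v => f v + c • g v) u =
      areaDensity n f u + c * mixedAreaDensity n f g u + c ^ 2 * areaDensity n g u := by
  simp only [areaDensity, mixedAreaDensity, pd_add_const_smul hf hg, map_add, map_smul,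
    LinearMap.add_apply, LinearMap.smul_apply, dotProduct_add, dotProduct_smul, smul_eq_mul]
  ring

lemma mixedAreaDensity_add_const_smul (hf : DifferentiableAt ℝ f u) (hg : DifferentiableAt ℝ g u)
    (c : ℝ) : mixedAreaDensity n h (fun v => f v + c • g v) u =
      mixedAreaDensity n h f u + c * mixedAreaDensity n h g u := by
  simp only [mixedAreaDensity, pd_add_const_smul hf hg, map_add, map_smul, LinearMap.add_apply,
    LinearMap.smul_apply, dotProduct_add, dotProduct_smul, smul_eq_mul]
  ring

lemma contDiffAt_areaDensity {k m : ℕ∞ω} (hn : ContDiffAt ℝ k n u) (hf : ContDiffAt ℝ m f u)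
    (hk : k + 1 ≤ m) : ContDiffAt ℝ k (areaDensity n f) u :=
  contDiffAt_dotProduct hn (contDiffAt_cross (contDiffAt_pd hf hk 0) (contDiffAt_pd hf hk 1))

end AreaDensity

/-- `n` is a field of unit vectors on `U` orthogonal to the partial derivatives of `f`, so that up
to sign it is the Gauss map of `f` wherever `f` is immersed. Since `f` may be singular, the notion
applies to a surface, to its parallel surfaces and to its Gauss map alike. -/
structure IsUnitNormalOn (n f : Param → Vec3) (U : Set Param) : Prop where
  unit : ∀ u ∈ U, n u ⬝ᵥ n u = 1
  orthogonal : ∀ u ∈ U, ∀ i, n u ⬝ᵥ pd i f u = 0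

namespace IsUnitNormalOn

variable {n f g : Param → Vec3} {U : Set Param} {u : Param}

lemma self (h : IsUnitNormalOn n f U) (hU : IsOpen U) (hn : DifferentiableOn ℝ n U) :
    IsUnitNormalOn n n U := by
  refine ⟨h.unit, fun u hu i => ?_⟩
  have hnu := hn.differentiableAt (hU.mem_nhds hu)
  have hconst : (fun v => n v ⬝ᵥ n v) =ᶠ[𝓝 u] fun _ => 1 :=
    eventually_of_mem (hU.mem_nhds hu) h.unit
  have hsum := pd_dotProduct_add_of_eventuallyEq_const hnu hnu hconst i
  rw [dotProduct_comm (pd i n u)] at hsum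
  linarith

lemma add_const_smul (hf : IsUnitNormalOn n f U) (hg : IsUnitNormalOn n g U) (hU : IsOpen U)
    (hdf : DifferentiableOn ℝ f U) (hdg : DifferentiableOn ℝ g U) (c : ℝ) :
    IsUnitNormalOn n (fun v => f v + c • g v) U := by
  refine ⟨hf.unit, fun u hu i => ?_⟩
  rw [pd_add_const_smul (hdf.differentiableAt (hU.mem_nhds hu))
    (hdg.differentiableAt (hU.mem_nhds hu)), dotProduct_add, dotProduct_smul,
    hf.orthogonal u hu, hg.orthogonal u hu, smul_zero, add_zero]

lemma pd_pd_dotProduct (h : IsUnitNormalOn n f U) (hU : IsOpen U) (hu : u ∈ U)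
    (hn : DifferentiableAt ℝ n u) (hf : ContDiffAt ℝ 2 f u) (i j : Fin 2) :
    pd i (pd j f) u ⬝ᵥ n u = -(pd j f u ⬝ᵥ pd i n u) := by
  have hconst : (fun v => pd j f v ⬝ᵥ n v) =ᶠ[𝓝 u] fun _ => 0 :=
    eventually_of_mem (hU.mem_nhds hu) fun v hv =>
      (dotProduct_comm _ _).trans (h.orthogonal v hv j)
  exact eq_neg_of_add_eq_zero_left
    (pd_dotProduct_add_of_eventuallyEq_const (differentiableAt_pd hf j) hn hconst i)

lemma pd_dotProduct_pd_symm (h : IsUnitNormalOn n f U) (hU : IsOpen U) (hu : u ∈ U)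
    (hn : DifferentiableAt ℝ n u) (hf : ContDiffAt ℝ 2 f u) (i j : Fin 2) :
    pd i f u ⬝ᵥ pd j n u = pd j f u ⬝ᵥ pd i n u := by
  have hsymm := congrArg (· ⬝ᵥ n u) (pd_comm hf j i)
  simpa only [h.pd_pd_dotProduct hU hu hn hf, neg_inj] using hsymm

lemma pd_cross_pd (hf : IsUnitNormalOn n f U) (hg : IsUnitNormalOn n g U) (hu : u ∈ U)
    (i j : Fin 2) : pd i f u ⨯₃ pd j g u = (n u ⬝ᵥ pd i f u ⨯₃ pd j g u) • n u :=
  cross_eq_smul_normal (hf.unit u hu) (hf.orthogonal u hu i) (hg.orthogonal u hu j)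

lemma det_fformI (h : IsUnitNormalOn n f U) (hu : u ∈ U) :
    (fformI f u).det = areaDensity n f u ^ 2 := by
  have horth := h.orthogonal u hu
  rw [det_fin_two, sq, areaDensity, triple_product_mul_triple_product (h.unit u hu) (horth 0)
    (horth 1) (horth 0) (horth 1)]
  rfl

lemma gaussMap_eq (h : IsUnitNormalOn n f U) (hu : u ∈ U) :
    gaussMap f u = (SignType.sign (areaDensity n f u) : ℝ) • n u := by
  have hcross : pd 0 f u ⨯₃ pd 1 f u = areaDensity n f u • n u := h.pd_cross_pd h hu 0 1
  rw [gaussMap, hcross, norm3_smul_of_unit (h.unit u hu), smul_smul, abs_inv_mul_self_eq_sign]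

lemma fformII_apply (h : IsUnitNormalOn n f U) (hU : IsOpen U) (hu : u ∈ U)
    (hn : DifferentiableAt ℝ n u) (hf : ContDiffAt ℝ 2 f u) (i j : Fin 2) :
    fformII f u i j = -(SignType.sign (areaDensity n f u) * (pd j f u ⬝ᵥ pd i n u)) := by
  rw [fformII, of_apply, dot3_eq_dotProduct, h.gaussMap_eq hu, dotProduct_smul,
    h.pd_pd_dotProduct hU hu hn hf, smul_eq_mul, mul_neg]

lemma det_fformII (h : IsUnitNormalOn n f U) (hU : IsOpen U) (hu : u ∈ U)
    (hn : DifferentiableOn ℝ n U) (hf : ContDiffAt ℝ 2 f u) (hW : areaDensity n f u ≠ 0) :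
    (fformII f u).det = areaDensity n n u * areaDensity n f u := by
  have hnu := hn.differentiableAt (hU.mem_nhds hu)
  have horth := h.orthogonal u hu
  have hnorth := (h.self hU hn).orthogonal u hu
  rw [det_fin_two, areaDensity, areaDensity, triple_product_mul_triple_product (h.unit u hu)
    (hnorth 0) (hnorth 1) (horth 0) (horth 1)]
  simp only [h.fformII_apply hU hu hnu hf, dotProduct_comm (pd _ n u)]
  linear_combination (pd 0 f u ⬝ᵥ pd 0 n u * pd 1 f u ⬝ᵥ pd 1 n u -
    pd 1 f u ⬝ᵥ pd 0 n u * pd 0 f u ⬝ᵥ pd 1 n u) * sign_sq_eq_one hW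

lemma gaussCurv_eq (h : IsUnitNormalOn n f U) (hU : IsOpen U) (hu : u ∈ U)
    (hn : DifferentiableOn ℝ n U) (hf : ContDiffAt ℝ 2 f u) (hW : areaDensity n f u ≠ 0) :
    gaussCurv f u = areaDensity n n u / areaDensity n f u := by
  rw [gaussCurv, h.det_fformII hU hu hn hf hW, h.det_fformI hu]
  field_simp

lemma meanCurv_eq (h : IsUnitNormalOn n f U) (hU : IsOpen U) (hu : u ∈ U)
    (hn : DifferentiableOn ℝ n U) (hf : ContDiffAt ℝ 2 f u) (hW : areaDensity n f u ≠ 0) :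
    meanCurv f u = -mixedAreaDensity n n f u / (2 * |areaDensity n f u|) := by
  have hnu := hn.differentiableAt (hU.mem_nhds hu)
  have hunit := h.unit u hu
  have horth := h.orthogonal u hu
  have hnorth := (h.self hU hn).orthogonal u hu
  have htrace : ∑ i, ∑ j, (fformI f u).adjugate i j * (pd j f u ⬝ᵥ pd i n u) =
      mixedAreaDensity n n f u * areaDensity n f u := by
    rw [mixedAreaDensity, areaDensity, add_mul,
      triple_product_mul_triple_product hunit (hnorth 0) (horth 1) (horth 0) (horth 1),
      triple_product_mul_triple_product hunit (horth 0) (hnorth 1) (horth 0) (horth 1)]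
    simp only [adjugate_fin_two, fformI, of_apply, dot3_eq_dotProduct, Fin.sum_univ_two,
      cons_val', cons_val_zero, cons_val_one, cons_val_fin_one, dotProduct_comm (pd _ n u),
      dotProduct_comm (pd 1 f u) (pd 0 f u)]
    ring
  have hsum : ∑ i, ∑ j, (fformI f u)⁻¹ i j * fformII f u i j =
      -((areaDensity n f u ^ 2)⁻¹ * SignType.sign (areaDensity n f u) *
        ∑ i, ∑ j, (fformI f u).adjugate i j * (pd j f u ⬝ᵥ pd i n u)) := by
    simp only [Matrix.inv_def, Ring.inverse_eq_inv', h.det_fformI hu, Matrix.smul_apply,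
      smul_eq_mul, h.fformII_apply hU hu hnu hf, Fin.sum_univ_two]
    ring
  have habs := abs_ne_zero.2 hW
  calc meanCurv f u
      = -mixedAreaDensity n n f u * (SignType.sign (areaDensity n f u) * areaDensity n f u) /
          (2 * areaDensity n f u ^ 2) := by
        rw [meanCurv, hsum, htrace]
        ring
    _ = -mixedAreaDensity n n f u / (2 * |areaDensity n f u|) := by
        rw [sign_mul_self, ← sq_abs]
        field_simp

end IsUnitNormalOn

section Beltrami

variable {n f : Param → Vec3} {U : Set Param} {u : Param}

lemma beltrami2_const_smul (a : Param → Matrix (Fin 2) (Fin 2) ℝ) (c : ℝ) (f : Param → Vec3)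
    (u : Param) : beltrami2 a (fun v => c • f v) u = c • beltrami2 a f u := by
  simp only [beltrami2, pd_const_smul c f, smul_comm _ c, pd_const_smul c, ← Finset.smul_sum,
    smul_neg]

/-- The flux `√|det a| a^{ij} f_{/j}`, of which `beltrami2 a f` is the negative divergence. -/
def beltramiFlux (a : Param → Matrix (Fin 2) (Fin 2) ℝ) (f : Param → Vec3) (i : Fin 2)
    (u : Param) : Vec3 :=
  ∑ j, (√|(a u).det| * (a u)⁻¹ i j) • pd j f u

lemma beltrami2_eq_neg_smul_sum_pd_beltramiFlux {a : Param → Matrix (Fin 2) (Fin 2) ℝ}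
    (ha : ∀ i j, DifferentiableAt ℝ (fun v => a v i j) u) (hdet : (a u).det ≠ 0)
    (hf : ContDiffAt ℝ 2 f u) :
    beltrami2 a f u = -((√|(a u).det|)⁻¹ • ∑ i, pd i (beltramiFlux a f i) u) := by
  have hdet_diff : DifferentiableAt ℝ (fun v => (a v).det) u := by
    simp only [det_fin_two]
    fun_prop
  have hadj_diff (i j) : DifferentiableAt ℝ (fun v => (a v).adjugate i j) u := by
    simp only [adjugate_fin_two]
    fin_cases i <;> fin_cases j
    exacts [ha 1 1, (ha 0 1).neg, (ha 1 0).neg, ha 0 0]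
  have hinv_diff (i j) : DifferentiableAt ℝ (fun v => (a v)⁻¹ i j) u := by
    simp only [Matrix.inv_def, Ring.inverse_eq_inv', Matrix.smul_apply, smul_eq_mul]
    exact (hdet_diff.inv hdet).mul (hadj_diff i j)
  have hsummand (i j) :
      DifferentiableAt ℝ (fun v => (√|(a v).det| * (a v)⁻¹ i j) • pd j f v) u :=
    (((hdet_diff.abs hdet).sqrt (abs_ne_zero.2 hdet)).mul (hinv_diff i j)).smul
      (differentiableAt_pd hf j)
  have hflux (i) : pd i (beltramiFlux a f i) u =
      ∑ j, pd i (fun v => (√|(a v).det| * (a v)⁻¹ i j) • pd j f v) u := by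
    rw [Fin.sum_univ_two, ← pd_add (hsummand i 0) (hsummand i 1)]
    congr 1
    funext v
    rw [beltramiFlux, Fin.sum_univ_two]
  simp only [beltrami2, hflux]

namespace IsUnitNormalOn

lemma beltramiFlux_fformI (h : IsUnitNormalOn n n U) (hu : u ∈ U) (f : Param → Vec3)
    (i : Fin 2) : beltramiFlux (fformI n) f i u =
      |areaDensity n n u|⁻¹ • ∑ j, (fformI n u).adjugate i j • pd j f u := by
  have hcoeff (j : Fin 2) : √|(fformI n u).det| * (fformI n u)⁻¹ i j =
      |areaDensity n n u|⁻¹ * (fformI n u).adjugate i j := by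
    rw [Matrix.inv_def, Matrix.smul_apply, Ring.inverse_eq_inv', h.det_fformI hu, abs_sq,
      Real.sqrt_sq_eq_abs, smul_eq_mul, ← sq_abs]
    rcases eq_or_ne |areaDensity n n u| 0 with hD | hD
    · simp [hD]
    · field_simp
  simp only [beltramiFlux, hcoeff, mul_smul, ← Finset.smul_sum]

lemma beltramiFlux_fformI_zero (h : IsUnitNormalOn n f U) (hU : IsOpen U) (hu : u ∈ U)
    (hn : DifferentiableOn ℝ n U) (hf : ContDiffAt ℝ 2 f u) {t : ℝ}
    (ht : mixedAreaDensity n n f u = t * areaDensity n n u) :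
    beltramiFlux (fformI n) f 0 u =
      (SignType.sign (areaDensity n n u) : ℝ) • n u ⨯₃ pd 1 (fun v => f v + (-t) • n v) u := by
  have hnu := hn.differentiableAt (hU.mem_nhds hu)
  have horth := h.orthogonal u hu
  have hnorth := (h.self hU hn).orthogonal u hu
  have hrow : (pd 1 n u ⬝ᵥ pd 1 n u) • pd 0 f u - (pd 0 n u ⬝ᵥ pd 1 n u) • pd 1 f u =
      areaDensity n n u • n u ⨯₃ (pd 1 f u - t • pd 1 n u) :=
    smul_sub_smul_eq_triple_product_smul_cross (h.unit u hu) (hnorth 0) (hnorth 1) (horth 0)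
      (horth 1) (h.pd_dotProduct_pd_symm hU hu hnu hf 0 1) ht
  rw [(h.self hU hn).beltramiFlux_fformI hu, ← abs_inv_mul_self_eq_sign, mul_smul,
    pd_add_const_smul (hf.differentiableAt two_ne_zero) hnu, neg_smul, ← sub_eq_add_neg, ← hrow]
  simp [adjugate_fin_two, fformI, dot3_eq_dotProduct, ← sub_eq_add_neg]

lemma beltramiFlux_fformI_one (h : IsUnitNormalOn n f U) (hU : IsOpen U) (hu : u ∈ U)
    (hn : DifferentiableOn ℝ n U) (hf : ContDiffAt ℝ 2 f u) {t : ℝ}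
    (ht : mixedAreaDensity n n f u = t * areaDensity n n u) :
    beltramiFlux (fformI n) f 1 u =
      -(SignType.sign (areaDensity n n u) : ℝ) • n u ⨯₃ pd 0 (fun v => f v + (-t) • n v) u := by
  have hnu := hn.differentiableAt (hU.mem_nhds hu)
  have horth := h.orthogonal u hu
  have hnorth := (h.self hU hn).orthogonal u hu
  have hswap (v w z : Vec3) : v ⬝ᵥ w ⨯₃ z = -(v ⬝ᵥ z ⨯₃ w) := by
    rw [← cross_anticomm, dotProduct_neg]
  have htrace : n u ⬝ᵥ pd 1 n u ⨯₃ pd 0 f u + n u ⬝ᵥ pd 1 f u ⨯₃ pd 0 n u =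
      t * (n u ⬝ᵥ pd 1 n u ⨯₃ pd 0 n u) := by
    rw [mixedAreaDensity, areaDensity] at ht
    rw [hswap _ (pd 1 n u), hswap _ (pd 1 f u), hswap _ (pd 1 n u) (pd 0 n u)]
    linear_combination -ht
  have hrow : (pd 0 n u ⬝ᵥ pd 0 n u) • pd 1 f u - (pd 1 n u ⬝ᵥ pd 0 n u) • pd 0 f u =
      -areaDensity n n u • n u ⨯₃ (pd 0 f u - t • pd 0 n u) := by
    rw [areaDensity, ← hswap]
    exact smul_sub_smul_eq_triple_product_smul_cross (h.unit u hu) (hnorth 1) (hnorth 0) (horth 1)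
      (horth 0) (h.pd_dotProduct_pd_symm hU hu hnu hf 1 0) htrace
  rw [(h.self hU hn).beltramiFlux_fformI hu, ← abs_inv_mul_self_eq_sign, ← mul_neg, mul_smul,
    pd_add_const_smul (hf.differentiableAt two_ne_zero) hnu, neg_smul t, ← sub_eq_add_neg, ← hrow]
  simp [adjugate_fin_two, fformI, dot3_eq_dotProduct, neg_add_eq_sub]

lemma sum_pd_beltramiFlux_fformI (h : IsUnitNormalOn n f U) (hU : IsOpen U) (hu : u ∈ U)
    (hn : ContDiffOn ℝ 2 n U) (hf : ContDiffOn ℝ 2 f U) {t : ℝ}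
    (ht : ∀ v ∈ U, mixedAreaDensity n n f v = t * areaDensity n n v)
    (hD : areaDensity n n u ≠ 0) :
    ∑ i, pd i (beltramiFlux (fformI n) f i) u = -(t * |areaDensity n n u|) • n u := by
  have hnd := hn.differentiableOn two_ne_zero
  have hfd := hf.differentiableOn two_ne_zero
  have hnu := hn.contDiffAt (hU.mem_nhds hu)
  have hfu := hf.contDiffAt (hU.mem_nhds hu)
  have hnn := h.self hU hnd
  let g : Param → Vec3 := fun v => f v + (-t) • n v
  have hg : IsUnitNormalOn n g U := h.add_const_smul hnn hU hfd hnd (-t)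
  have hgu : ContDiffAt ℝ 2 g u := hfu.add (hnu.const_smul (-t))
  have hmixed : mixedAreaDensity n n g u = -(t * areaDensity n n u) := by
    rw [mixedAreaDensity_add_const_smul (hfu.differentiableAt two_ne_zero)
      (hnu.differentiableAt two_ne_zero), mixedAreaDensity_self, ht u hu]
    ring
  have hsign := eventually_sign_eq (contDiffAt_areaDensity (hnu.of_le one_le_two) hnu
    (by norm_num)).continuousAt hD
  have hflux_zero : beltramiFlux (fformI n) f 0 =ᶠ[𝓝 u]
      fun v => (SignType.sign (areaDensity n n u) : ℝ) • n v ⨯₃ pd 1 g v := by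
    filter_upwards [hsign, hU.mem_nhds hu] with v hv hvU
    rw [← hv, h.beltramiFlux_fformI_zero hU hvU hnd (hf.contDiffAt (hU.mem_nhds hvU)) (ht v hvU)]
  have hflux_one : beltramiFlux (fformI n) f 1 =ᶠ[𝓝 u]
      fun v => -(SignType.sign (areaDensity n n u) : ℝ) • n v ⨯₃ pd 0 g v := by
    filter_upwards [hsign, hU.mem_nhds hu] with v hv hvU
    rw [← hv, h.beltramiFlux_fformI_one hU hvU hnd (hf.contDiffAt (hU.mem_nhds hvU)) (ht v hvU)]
  rw [Fin.sum_univ_two, pd_congr hflux_zero, pd_congr hflux_one, pd_const_smul, pd_const_smul,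
    neg_smul, ← sub_eq_add_neg, ← smul_sub,
    pd_cross_pd_sub_pd_cross_pd (hnu.differentiableAt two_ne_zero) hgu,
    hnn.pd_cross_pd hg hu, hg.pd_cross_pd hnn hu, ← add_smul, ← mixedAreaDensity, hmixed,
    smul_smul, mul_neg, mul_left_comm, sign_mul_self]

theorem beltrami2_fformI (h : IsUnitNormalOn n f U) (hU : IsOpen U) (hu : u ∈ U)
    (hn : ContDiffOn ℝ 2 n U) (hf : ContDiffOn ℝ 2 f U) {t : ℝ}
    (ht : ∀ v ∈ U, mixedAreaDensity n n f v = t * areaDensity n n v)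
    (hD : areaDensity n n u ≠ 0) : beltrami2 (fformI n) f u = t • n u := by
  have hnu := hn.contDiffAt (hU.mem_nhds hu)
  have hdet := (h.self hU (hn.differentiableOn two_ne_zero)).det_fformI hu
  have hdet_ne : (fformI n u).det ≠ 0 := hdet ▸ pow_ne_zero 2 hD
  have hentries (i j : Fin 2) : DifferentiableAt ℝ (fun v => fformI n v i j) u :=
    (contDiffAt_dotProduct (contDiffAt_pd (k := 1) hnu (by norm_num) i)
      (contDiffAt_pd hnu (by norm_num) j)).differentiableAt one_ne_zero
  rw [beltrami2_eq_neg_smul_sum_pd_beltramiFlux hentries hdet_ne (hf.contDiffAt (hU.mem_nhds hu)),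
    h.sum_pd_beltramiFlux_fformI hU hu hn hf ht hD, hdet, abs_sq, Real.sqrt_sq_eq_abs, smul_smul,
    ← neg_smul, mul_neg, neg_neg, mul_left_comm, inv_mul_cancel₀ (abs_ne_zero.2 hD), mul_one]

end IsUnitNormalOn

end Beltrami

section GaussMap

variable {x : Param → Vec3} {U : Set Param} {u : Param}

lemma Immersed.norm3_cross_ne_zero (himm : Immersed x U) (hu : u ∈ U) :
    norm3 (pd 0 x u ⨯₃ pd 1 x u) ≠ 0 :=
  norm3_ne_zero (crossProduct_ne_zero_iff_linearIndependent.2 (himm u hu))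

lemma Immersed.isUnitNormalOn_gaussMap (himm : Immersed x U) :
    IsUnitNormalOn (gaussMap x) x U where
  unit u hu := by
    have hne := himm.norm3_cross_ne_zero hu
    rw [gaussMap, smul_dotProduct, dotProduct_smul, ← norm3_mul_self, smul_eq_mul, smul_eq_mul]
    field_simp
  orthogonal u _ i := by
    rw [gaussMap, smul_dotProduct, dotProduct_comm]
    fin_cases i <;> simp

lemma Immersed.areaDensity_gaussMap_pos (himm : Immersed x U) (hu : u ∈ U) :
    0 < areaDensity (gaussMap x) x u := by
  have hpos : 0 < norm3 (pd 0 x u ⨯₃ pd 1 x u) :=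
    (Real.sqrt_nonneg _).lt_of_ne' (himm.norm3_cross_ne_zero hu)
  rw [areaDensity, gaussMap, smul_dotProduct, ← norm3_mul_self, smul_eq_mul]
  positivity

lemma Immersed.contDiffOn_gaussMap {k m : ℕ∞ω} (himm : Immersed x U) (hU : IsOpen U)
    (hx : ContDiffOn ℝ m x U) (hk : k + 1 ≤ m) : ContDiffOn ℝ k (gaussMap x) U := by
  intro u hu
  have hxu := hx.contDiffAt (hU.mem_nhds hu)
  have hne := himm.norm3_cross_ne_zero hu
  have hcross := contDiffAt_cross (contDiffAt_pd hxu hk 0) (contDiffAt_pd hxu hk 1)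
  have hnorm : ContDiffAt ℝ k (fun v => norm3 (pd 0 x v ⨯₃ pd 1 x v)) u :=
    (contDiffAt_dotProduct hcross hcross).sqrt (norm3_mul_self _ ▸ mul_self_ne_zero.2 hne)
  exact ((hnorm.inv hne).smul hcross).contDiffWithinAt

lemma Immersed.areaDensity_gaussMap_self (himm : Immersed x U) (hU : IsOpen U)
    (hx : ContDiffOn ℝ 2 x U) (hu : u ∈ U) :
    areaDensity (gaussMap x) (gaussMap x) u = gaussCurv x u * areaDensity (gaussMap x) x u := by
  have hW := (himm.areaDensity_gaussMap_pos hu).ne'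
  have hn := (himm.contDiffOn_gaussMap (k := 1) hU hx (by norm_num)).differentiableOn one_ne_zero
  rw [himm.isUnitNormalOn_gaussMap.gaussCurv_eq hU hu hn (hx.contDiffAt (hU.mem_nhds hu)) hW,
    div_mul_cancel₀ _ hW]

lemma Immersed.mixedAreaDensity_gaussMap (himm : Immersed x U) (hU : IsOpen U)
    (hx : ContDiffOn ℝ 2 x U) (hu : u ∈ U) :
    mixedAreaDensity (gaussMap x) (gaussMap x) x u =
      -2 * meanCurv x u * areaDensity (gaussMap x) x u := by
  have hW := himm.areaDensity_gaussMap_pos hu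
  have hn := (himm.contDiffOn_gaussMap (k := 1) hU hx (by norm_num)).differentiableOn one_ne_zero
  rw [himm.isUnitNormalOn_gaussMap.meanCurv_eq hU hu hn (hx.contDiffAt (hU.mem_nhds hu)) hW.ne',
    abs_of_pos hW]
  field_simp

lemma Immersed.areaDensity_gaussMap_self_ne_zero (himm : Immersed x U) (hU : IsOpen U)
    (hx : ContDiffOn ℝ 2 x U) (hu : u ∈ U) (hpar : (fformII x u).det ≠ 0) :
    areaDensity (gaussMap x) (gaussMap x) u ≠ 0 := by
  have hW := (himm.areaDensity_gaussMap_pos hu).ne'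
  have hn := (himm.contDiffOn_gaussMap (k := 1) hU hx (by norm_num)).differentiableOn one_ne_zero
  rw [himm.isUnitNormalOn_gaussMap.det_fformII hU hu hn (hx.contDiffAt (hU.mem_nhds hu)) hW] at hpar
  exact left_ne_zero_of_mul hpar

lemma Immersed.gaussCurv_ne_zero (himm : Immersed x U) (hU : IsOpen U)
    (hx : ContDiffOn ℝ 2 x U) (hu : u ∈ U) (hpar : (fformII x u).det ≠ 0) :
    gaussCurv x u ≠ 0 :=
  left_ne_zero_of_mul (himm.areaDensity_gaussMap_self hU hx hu ▸
    himm.areaDensity_gaussMap_self_ne_zero hU hx hu hpar)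

lemma fformIII_eq_fformI_gaussMap (x : Param → Vec3) : fformIII x = fformI (gaussMap x) := rfl

theorem Immersed.beltrami2_fformIII_gaussMap (himm : Immersed x U) (hU : IsOpen U)
    (hx : ContDiffOn ℝ 3 x U) (hu : u ∈ U) (hpar : (fformII x u).det ≠ 0) :
    beltrami2 (fformIII x) (gaussMap x) u = (2 : ℝ) • gaussMap x u := by
  have hn : ContDiffOn ℝ 2 (gaussMap x) U := himm.contDiffOn_gaussMap hU hx (by norm_num)
  have hself := himm.isUnitNormalOn_gaussMap.self hU (hn.differentiableOn two_ne_zero)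
  rw [fformIII_eq_fformI_gaussMap]
  exact hself.beltrami2_fformI hU hu hn hn (fun v _ => mixedAreaDensity_self _ _ v)
    (himm.areaDensity_gaussMap_self_ne_zero hU (hx.of_le (by norm_num)) hu hpar)

end GaussMap

namespace Immersed

variable {x : Param → Vec3} {U : Set Param} {u : Param}

lemma isUnitNormalOn_parallel (himm : Immersed x U) (hU : IsOpen U) (hx : ContDiffOn ℝ 2 x U)
    (μ : ℝ) : IsUnitNormalOn (gaussMap x) (fun v => x v + μ • gaussMap x v) U := by
  have hn := (himm.contDiffOn_gaussMap (k := 1) hU hx (by norm_num)).differentiableOn one_ne_zero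
  have hunit := himm.isUnitNormalOn_gaussMap
  exact hunit.add_const_smul (hunit.self hU hn) hU (hx.differentiableOn two_ne_zero) hn μ

lemma areaDensity_parallel (himm : Immersed x U) (hU : IsOpen U) (hx : ContDiffOn ℝ 2 x U)
    (hu : u ∈ U) (μ : ℝ) :
    areaDensity (gaussMap x) (fun v => x v + μ • gaussMap x v) u =
      (1 - 2 * μ * meanCurv x u + μ ^ 2 * gaussCurv x u) * areaDensity (gaussMap x) x u := by
  have hn := (himm.contDiffOn_gaussMap (k := 1) hU hx (by norm_num)).differentiableOn one_ne_zero
  rw [areaDensity_add_const_smul ((hx.differentiableOn two_ne_zero).differentiableAt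
    (hU.mem_nhds hu)) (hn.differentiableAt (hU.mem_nhds hu)), mixedAreaDensity_comm,
    himm.mixedAreaDensity_gaussMap hU hx hu, himm.areaDensity_gaussMap_self hU hx hu]
  ring

lemma mixedAreaDensity_parallel (himm : Immersed x U) (hU : IsOpen U) (hx : ContDiffOn ℝ 2 x U)
    (hu : u ∈ U) (μ : ℝ) :
    mixedAreaDensity (gaussMap x) (gaussMap x) (fun v => x v + μ • gaussMap x v) u =
      2 * (μ * gaussCurv x u - meanCurv x u) * areaDensity (gaussMap x) x u := by
  have hn := (himm.contDiffOn_gaussMap (k := 1) hU hx (by norm_num)).differentiableOn one_ne_zero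
  rw [mixedAreaDensity_add_const_smul ((hx.differentiableOn two_ne_zero).differentiableAt
    (hU.mem_nhds hu)) (hn.differentiableAt (hU.mem_nhds hu)), mixedAreaDensity_self,
    himm.mixedAreaDensity_gaussMap hU hx hu, himm.areaDensity_gaussMap_self hU hx hu]
  ring

lemma meanCurv_parallel (himm : Immersed x U) (hU : IsOpen U) (hx : ContDiffOn ℝ 3 x U)
    (hu : u ∈ U) {μ : ℝ} (hreg : 1 - 2 * μ * meanCurv x u + μ ^ 2 * gaussCurv x u ≠ 0) :
    meanCurv (fun v => x v + μ • gaussMap x v) u = (meanCurv x u - μ * gaussCurv x u) /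
      |1 - 2 * μ * meanCurv x u + μ ^ 2 * gaussCurv x u| := by
  have hx2 : ContDiffOn ℝ 2 x U := hx.of_le (by norm_num)
  have hn : ContDiffOn ℝ 2 (gaussMap x) U := himm.contDiffOn_gaussMap hU hx (by norm_num)
  have hparallel : ContDiffOn ℝ 2 (fun v => x v + μ • gaussMap x v) U :=
    hx2.add (hn.const_smul μ)
  have hW := himm.areaDensity_gaussMap_pos hu
  have harea := himm.areaDensity_parallel hU hx2 hu μ
  have hne := abs_ne_zero.2 hreg
  rw [(himm.isUnitNormalOn_parallel hU hx2 μ).meanCurv_eq hU hu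
    (hn.differentiableOn two_ne_zero) (hparallel.contDiffAt (hU.mem_nhds hu))
    (harea ▸ mul_ne_zero hreg hW.ne'), harea, himm.mixedAreaDensity_parallel hU hx2 hu, abs_mul,
    abs_of_pos hW]
  field_simp
  ring

theorem beltrami2_fformIII_parallel_eq_zero (himm : Immersed x U) (hU : IsOpen U)
    (hx : ContDiffOn ℝ 3 x U) {μ : ℝ} (hH : ∀ v ∈ U, meanCurv x v = μ * gaussCurv x v)
    (hu : u ∈ U) (hpar : (fformII x u).det ≠ 0) :
    beltrami2 (fformIII x) (fun v => x v + μ • gaussMap x v) u = 0 := by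
  have hx2 : ContDiffOn ℝ 2 x U := hx.of_le (by norm_num)
  have hn : ContDiffOn ℝ 2 (gaussMap x) U := himm.contDiffOn_gaussMap hU hx (by norm_num)
  have htrace (v) (hv : v ∈ U) : mixedAreaDensity (gaussMap x) (gaussMap x)
      (fun v => x v + μ • gaussMap x v) v = 0 * areaDensity (gaussMap x) (gaussMap x) v := by
    rw [himm.mixedAreaDensity_parallel hU hx2 hv, hH v hv]
    ring
  rw [fformIII_eq_fformI_gaussMap, (himm.isUnitNormalOn_parallel hU hx2 μ).beltrami2_fformI hU hu hn
    (hx2.add (hn.const_smul μ)) htrace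
    (himm.areaDensity_gaussMap_self_ne_zero hU hx2 hu hpar), zero_smul]

lemma nonconstOn_parallel (himm : Immersed x U) {μ : ℝ} (hμ : μ ≠ 0)
    (hnotsph : ¬ ∃ c : Vec3, ∃ r : ℝ, 0 < r ∧ ∀ u ∈ U, norm3 (x u - c) = r) :
    NonconstOn (fun v => x v + μ • gaussMap x v) U := by
  rintro ⟨c, hc⟩
  refine hnotsph ⟨c, |μ|, abs_pos.2 hμ, fun u hu => ?_⟩
  have hradius : x u - c = (-μ) • gaussMap x u := by
    rw [← hc u hu, sub_add_cancel_left, neg_smul]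
  rw [hradius, norm3_smul_of_unit (himm.isUnitNormalOn_gaussMap.unit u hu), abs_neg]

end Immersed

section Nonconstancy

variable {n f : Param → Vec3} {U : Set Param} {u : Param}

lemma nonconstOn_of_areaDensity_ne_zero (hU : IsOpen U) (hu : u ∈ U)
    (h : areaDensity n f u ≠ 0) : NonconstOn f U := by
  rintro ⟨c, hc⟩
  have hconst : f =ᶠ[𝓝 u] fun _ => c := eventually_of_mem (hU.mem_nhds hu) hc
  exact h (by rw [areaDensity, pd_congr hconst, pd_const, map_zero, LinearMap.zero_apply,
    dotProduct_zero])

lemma NonconstOn.const_smul (hf : NonconstOn f U) {c : ℝ} (hc : c ≠ 0) :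
    NonconstOn (fun v => c • f v) U := by
  rintro ⟨w, hw⟩
  exact hf ⟨c⁻¹ • w, fun u hu => (eq_inv_smul_iff₀ hc).2 (hw u hu)⟩

end Nonconstancy

theorem stmt19_general (U : Set Param) (x : Param → Vec3)
    (hU : IsOpen U) (hUne : U.Nonempty)
    (hx : ContDiffOn ℝ 3 x U) (himm : Immersed x U)
    (hpar : ∀ u ∈ U, (fformII x u).det ≠ 0)
    (μ : ℝ) (hμ : μ ≠ 0)
    (hratio : ∀ u ∈ U, meanCurv x u / gaussCurv x u = μ)
    (hreg : ∀ u ∈ U, 1 - 2 * μ * meanCurv x u + μ ^ 2 * gaussCurv x u ≠ 0)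
    (hnotsph : ¬ ∃ c : Vec3, ∃ r : ℝ, 0 < r ∧ ∀ u ∈ U, norm3 (x u - c) = r) :
    (∀ u ∈ U, x u = (x u + μ • gaussMap x u) + (-μ) • gaussMap x u) ∧
    (∀ u ∈ U, beltrami2 (fformIII x) (fun v => x v + μ • gaussMap x v) u = 0) ∧
    (∀ u ∈ U, meanCurv (fun v => x v + μ • gaussMap x v) u = 0) ∧
    (∀ u ∈ U, beltrami2 (fformIII x) (fun v => (-μ) • gaussMap x v) u =
      (2 : ℝ) • ((-μ) • gaussMap x u)) ∧
    NonconstOn (fun v => x v + μ • gaussMap x v) U ∧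
    NonconstOn (fun v => (-μ) • gaussMap x v) U := by
  obtain ⟨u₀, hu₀⟩ := hUne
  have hx2 : ContDiffOn ℝ 2 x U := hx.of_le (by norm_num)
  have hH (u) (hu : u ∈ U) : meanCurv x u = μ * gaussCurv x u :=
    (div_eq_iff (himm.gaussCurv_ne_zero hU hx2 hu (hpar u hu))).1 (hratio u hu)
  have hgauss : NonconstOn (gaussMap x) U := nonconstOn_of_areaDensity_ne_zero hU hu₀
    (himm.areaDensity_gaussMap_self_ne_zero hU hx2 hu₀ (hpar u₀ hu₀))
  refine ⟨fun u _ => by module, fun u hu => ?_, fun u hu => ?_, fun u hu => ?_,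
    himm.nonconstOn_parallel hμ hnotsph, hgauss.const_smul (neg_ne_zero.2 hμ)⟩
  · exact himm.beltrami2_fformIII_parallel_eq_zero hU hx hH hu (hpar u hu)
  · rw [himm.meanCurv_parallel hU hx hu (hreg u hu), hH u hu, sub_self, zero_div]
  · rw [beltrami2_const_smul, himm.beltrami2_fformIII_gaussMap hU hx hu (hpar u hu), smul_comm]

/-- Theorem 4.4: if `H/K = μ` is a nonzero constant on `U` and `M` is not
part of a sphere, then `M` is of null III-type 2: `x = x* + (−μ n)` where `x* = x + μ n`
satisfies `Δ^{III} x* = 0` (it is minimal), `Δ^{III}(−μ n) = 2(−μ n)`, and both summands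
are nonconstant. -/
theorem stmt19 (U : Set Param) (x : Param → Vec3)
    (hU : IsOpen U) (hUconn : IsConnected U)
    (hx : ContDiffOn ℝ (⊤ : ℕ∞) x U) (himm : Immersed x U)
    (hpar : ∀ u ∈ U, (fformII x u).det ≠ 0)
    (μ : ℝ) (hμ : μ ≠ 0)
    (hratio : ∀ u ∈ U, meanCurv x u / gaussCurv x u = μ)
    (hreg : ∀ u ∈ U, 1 - 2 * μ * meanCurv x u + μ ^ 2 * gaussCurv x u ≠ 0)
    (hnotsph : ¬ ∃ c : Vec3, ∃ r : ℝ, 0 < r ∧ ∀ u ∈ U, norm3 (x u - c) = r) :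
    (∀ u ∈ U, x u = (x u + μ • gaussMap x u) + (-μ) • gaussMap x u) ∧
    (∀ u ∈ U, beltrami2 (fformIII x) (fun v => x v + μ • gaussMap x v) u = 0) ∧
    (∀ u ∈ U, meanCurv (fun v => x v + μ • gaussMap x v) u = 0) ∧
    (∀ u ∈ U, beltrami2 (fformIII x) (fun v => (-μ) • gaussMap x v) u =
      (2 : ℝ) • ((-μ) • gaussMap x u)) ∧
    NonconstOn (fun v => x v + μ • gaussMap x v) U ∧
    NonconstOn (fun v => (-μ) • gaussMap x v) U :=
  stmt19_general U x hU hUconn.nonempty (hx.of_le ENat.LEInfty.out) himm hpar μ hμ hratio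
    hreg hnotsph
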